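/- Let S be a stationary subset of ω₁. Then the space S* = {f ∈ ω₁^ω : sup_n f(n) ∈ S} is τ-Baire. -/

import Mathlib

universe u v w

section Tandem

variable {E : Type*} [TopologicalSpace E]

/-- The `n`-th move of a play of the tandem Banach–Mazur game, which is played in
the order `V₁, V₁', W₁, W₁', V₂, V₂', W₂, W₂', …` : player β' chooses the sets `Vᵢ`
(indices `≡ 0 [MOD 4]`) and `Wᵢ` (indices `≡ 2 [MOD 4]`), player α' chooses the sets
`Vᵢ'` (indices `≡ 1 [MOD 4]`) and `Wᵢ'` (indices `≡ 3 [MOD 4]`). -/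
def tandemMove (V V' W W' : ℕ → Set E) (n : ℕ) : Set E :=
  if n % 4 = 0 then V (n / 4)
  else if n % 4 = 1 then V' (n / 4)
  else if n % 4 = 2 then W (n / 4)
  else W' (n / 4)

/-- The history of the first `n` moves of a tandem play (as a function that is `∅`
from index `n` onwards, so that a strategy can only use the past moves). -/
def tandemHist (V V' W W' : ℕ → Set E) (n : ℕ) : ℕ → Set E :=
  fun i => if i < n then tandemMove V V' W W' i else ∅

/-- A legal tandem history of length `n`: all moves are nonempty open sets, the moves
on the `V`-board (indices `≡ 0, 1 [MOD 4]`) are nested decreasingly, and so are the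
moves on the `W`-board (indices `≡ 2, 3 [MOD 4]`). -/
def TandemLegalHist (n : ℕ) (h : ℕ → Set E) : Prop :=
  (∀ i < n, IsOpen (h i) ∧ (h i).Nonempty) ∧
  (∀ i j : ℕ, i < j → j < n → i % 4 < 2 → j % 4 < 2 → h j ⊆ h i) ∧
  (∀ i j : ℕ, i < j → j < n → 2 ≤ i % 4 → 2 ≤ j % 4 → h j ⊆ h i)

/-- A strategy for player β' in the tandem game: to every legal history of even length
it assigns a nonempty open set, contained in the previous move on the same board
(the first moves `V₁` and `W₁`, at positions `0` and `2`, are unconstrained). -/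
def IsTandemBetaStrat (σ : ℕ → (ℕ → Set E) → Set E) : Prop :=
  ∀ (n : ℕ) (h : ℕ → Set E), TandemLegalHist n h → n % 2 = 0 →
    IsOpen (σ n h) ∧ (σ n h).Nonempty ∧ (4 ≤ n → σ n h ⊆ h (n - 3))

/-- A strategy for player α' in the tandem game: to every legal history of odd length
it assigns a nonempty open subset of the immediately preceding move. -/
def IsTandemAlphaStrat (σ : ℕ → (ℕ → Set E) → Set E) : Prop :=
  ∀ (n : ℕ) (h : ℕ → Set E), TandemLegalHist n h → n % 2 = 1 →
    IsOpen (σ n h) ∧ (σ n h).Nonempty ∧ σ n h ⊆ h (n - 1)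

/-- The play `(V, V', W, W')` follows the β'-strategy `σ`. -/
def TandemFollowsBeta (σ : ℕ → (ℕ → Set E) → Set E) (V V' W W' : ℕ → Set E) : Prop :=
  ∀ k : ℕ, V k = σ (4 * k) (tandemHist V V' W W' (4 * k)) ∧
    W k = σ (4 * k + 2) (tandemHist V V' W W' (4 * k + 2))

/-- The play `(V, V', W, W')` follows the α'-strategy `σ`. -/
def TandemFollowsAlpha (σ : ℕ → (ℕ → Set E) → Set E) (V V' W W' : ℕ → Set E) : Prop :=
  ∀ k : ℕ, V' k = σ (4 * k + 1) (tandemHist V V' W W' (4 * k + 1)) ∧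
    W' k = σ (4 * k + 3) (tandemHist V V' W W' (4 * k + 3))

end Tandem

/-- A space is *τ-Baire* if for every strategy of player β' in the tandem
Banach–Mazur game there is a strategy of player α' which beats it, i.e. in their
play both `⋂ k, V k` and `⋂ k, W k` are nonempty. -/
def TauBaire (E : Type*) [TopologicalSpace E] : Prop :=
  ∀ σβ : ℕ → (ℕ → Set E) → Set E, IsTandemBetaStrat σβ →
    ∃ σα : ℕ → (ℕ → Set E) → Set E, IsTandemAlphaStrat σα ∧
      ∀ V V' W W' : ℕ → Set E,
        TandemFollowsBeta σβ V V' W W' → TandemFollowsAlpha σα V V' W W' →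
        (⋂ k, V k).Nonempty ∧ (⋂ k, W k).Nonempty

/-- The first uncountable ordinal `ω₁`, viewed as the set of countable ordinals,
endowed below with the *discrete* topology. -/
def Omega1 : Type 1 :=
  {o : Ordinal.{0} // o < (Cardinal.aleph 1).ord}

noncomputable instance : LinearOrder Omega1 :=
  inferInstanceAs (LinearOrder {o : Ordinal.{0} // o < (Cardinal.aleph 1).ord})

instance : TopologicalSpace Omega1 := ⊥

instance : DiscreteTopology Omega1 := ⟨rfl⟩

/-- The ordinal underlying an element of `ω₁`. -/
def Omega1.toOrdinal (a : Omega1) : Ordinal.{0} :=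
  Subtype.val a

/-- `C ⊆ ω₁` is cofinal (unbounded). -/
def Omega1.IsCofinal (C : Set Omega1) : Prop :=
  ∀ a : Omega1, ∃ c ∈ C, a ≤ c

/-- `C ⊆ ω₁` is closed in the order topology of `ω₁`: it contains every point `a` such
that `C ∩ [0, a)` is nonempty and unbounded below `a`. -/
def Omega1.IsClosed (C : Set Omega1) : Prop :=
  ∀ a : Omega1, (C ∩ Set.Iio a).Nonempty →
    (∀ b < a, ∃ c ∈ C, b < c ∧ c < a) → a ∈ C

/-- `S ⊆ ω₁` is stationary: it meets every closed cofinal subset of `ω₁`. -/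
def Omega1.IsStationary (S : Set Omega1) : Prop :=
  ∀ C : Set Omega1, Omega1.IsCofinal C → Omega1.IsClosed C → (S ∩ C).Nonempty

/-- The space `S* = {f ∈ ω₁^ω : sup_n f n ∈ S}`, a subspace of the product `ω₁^ω`
of countably many copies of discrete `ω₁`. -/
def sStar (S : Set Omega1) : Set (ℕ → Omega1) :=
  {f | ∃ s ∈ S, (⨆ n, (f n).toOrdinal) = s.toOrdinal}

/-!
A tree argument. Label the possible answers of α' by countable ordinals: asked for an answer with
label `a` in round `r`, α' shrinks the challenge to a basic open set, given by a finite sequence of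
length greater than `r` in which `a` occurs. Once the strategy of β' is fixed, a finite list of
labels determines the play so far. So there is a club of `d < ω₁` such that all entries played at
the nodes with labels below `d` are themselves below `d`, and `S` contains such a `d`, which may be
taken to be a limit. If on either board α' uses every label below `d`, then the finite sequences
played on that board unite to a sequence with range exactly `d`; its supremum is `d ∈ S`, so it is a
point of `S*` lying in all sets played there.
-/

open Set Function PiNat

namespace Omega1

instance : WellFoundedLT Omega1 :=
  inferInstanceAs (WellFoundedLT {o : Ordinal.{0} // o < (Cardinal.aleph 1).ord})

theorem isSuccLimit_ord_aleph_one : Order.IsSuccLimit (Cardinal.aleph 1).ord :=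
  Cardinal.isSuccLimit_ord (Cardinal.aleph0_le_aleph 1)

instance : Nonempty Omega1 := ⟨⟨0, isSuccLimit_ord_aleph_one.bot_lt⟩⟩

noncomputable instance : OrderBot Omega1 := WellFoundedLT.toOrderBot Omega1

noncomputable instance : ConditionallyCompleteLinearOrderBot Omega1 :=
  WellFoundedLT.conditionallyCompleteLinearOrderBot Omega1

theorem exists_forall_lt_of_countable {s : Set Omega1} (hs : s.Countable) :
    ∃ c : Omega1, ∀ x ∈ s, x < c := by
  have : Countable s := hs
  have : Small.{0} s := Countable.toSmall s
  have hsup : ⨆ x : s, x.1.toOrdinal + 1 < (Cardinal.aleph 1).ord := by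
    rw [Cardinal.ord_aleph]
    refine Ordinal.iSup_lt_omega_one fun x => ?_
    rw [← Cardinal.ord_aleph]
    exact isSuccLimit_ord_aleph_one.add_one_lt x.1.2
  exact ⟨⟨_, hsup⟩, fun x hx => show x.toOrdinal < _ from Order.add_one_le_iff.1 <|
    Ordinal.le_iSup (fun x : s => x.1.toOrdinal + 1) ⟨x, hx⟩⟩

theorem bddAbove_of_countable {s : Set Omega1} (hs : s.Countable) : BddAbove s :=
  let ⟨c, hc⟩ := exists_forall_lt_of_countable hs
  ⟨c, fun x hx => (hc x hx).le⟩

theorem countable_Iic (a : Omega1) : (Iic a).Countable := by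
  have h : (Iic a.toOrdinal).Countable := by
    rw [← Order.Iio_succ, ← Cardinal.le_aleph0_iff_set_countable, Cardinal.mk_Iio_ordinal,
      Cardinal.lift_le_aleph0, ← Cardinal.lt_aleph_one_iff]
    exact Cardinal.lt_ord.1 (isSuccLimit_ord_aleph_one.succ_lt a.2)
  exact h.preimage_of_injOn Subtype.val_injective.injOn

theorem isClosed_setOf_forall_lt (a : Omega1) (G : Omega1 → Omega1) :
    Omega1.IsClosed {d | a < d ∧ ∀ e < d, G e < d} := by
  rintro x ⟨c, ⟨hac, -⟩, hcx⟩ hx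
  refine ⟨hac.trans hcx, fun e he => ?_⟩
  obtain ⟨c', ⟨-, hc'⟩, hec', hc'x⟩ := hx e he
  exact (hc' e hec').trans hc'x

theorem isCofinal_setOf_forall_lt (a : Omega1) (G : Omega1 → Omega1) :
    Omega1.IsCofinal {d | a < d ∧ ∀ e < d, G e < d} := by
  intro b
  choose next hnext using fun e : Omega1 =>
    exists_forall_lt_of_countable (((countable_Iic e).image G).insert e)
  let s : ℕ → Omega1 := fun n => next^[n] (max a b)
  have hs : ∀ n, s (n + 1) = next (s n) := fun n => iterate_succ_apply' next n _
  have hbdd : BddAbove (range s) := bddAbove_of_countable (countable_range s)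
  have hlt : ∀ n, s n < ⨆ n, s n := fun n =>
    ((hnext _ _ (mem_insert _ _)).trans_eq (hs n).symm).trans_le (le_ciSup hbdd (n + 1))
  refine ⟨⨆ n, s n, ⟨(le_max_left a b).trans_lt (hlt 0), fun e he => ?_⟩,
    (le_max_right a b).trans (hlt 0).le⟩
  obtain ⟨n, hn⟩ := exists_lt_of_lt_ciSup he
  exact ((hnext (s n) (G e) (.inr ⟨e, hn.le, rfl⟩)).trans_eq (hs n).symm).trans (hlt _)

variable {S : Set Omega1}

theorem IsStationary.isCofinal (hS : IsStationary S) : Omega1.IsCofinal S := fun a =>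
  let ⟨d, hd, had, _⟩ := hS _ (isCofinal_setOf_forall_lt a id) (isClosed_setOf_forall_lt a id)
  ⟨d, hd, had.le⟩

/- A limit `d` is closed under all finitary `F` as soon as it is closed under the single unary
operation `G`, where `G e` bounds the values of `F` at lists with entries at most `e`. -/
theorem IsStationary.exists_isSuccLimit_closedUnder {ι : Type*} [Countable ι] (hS : IsStationary S)
    (F : List Omega1 → ι → Omega1) :
    ∃ d ∈ S, Order.IsSuccLimit d ∧ ∀ l : List Omega1, (∀ x ∈ l, x < d) → ∀ i, F l i < d := by
  have hcount : ∀ e, {l : List Omega1 | ∀ x ∈ l, x ∈ Iic e}.Countable := fun e => by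
    have : Countable (Iic e) := countable_Iic e
    rw [← range_list_map_coe]
    exact countable_range _
  choose G hG using fun e : Omega1 => exists_forall_lt_of_countable
    (((hcount e).biUnion fun l _ => countable_range (F l)).insert e)
  obtain ⟨d, hdS, hbot, hd⟩ := hS _ (isCofinal_setOf_forall_lt ⊥ G) (isClosed_setOf_forall_lt ⊥ G)
  refine ⟨d, hdS, ⟨hbot.not_isMin, fun e he => ?_⟩, fun l hl i => ?_⟩
  · exact he.2 (hG e e (mem_insert _ _)) (hd e he.lt)
  · have hsup : l.toFinset.sup id < d := (Finset.sup_lt_iff hbot).2 fun x hx =>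
      hl x (List.mem_toFinset.1 hx)
    have hle : ∀ x ∈ l, x ≤ l.toFinset.sup id := fun x hx =>
      Finset.le_sup (f := id) (List.mem_toFinset.2 hx)
    exact (hG _ _ (.inr (mem_biUnion hle (mem_range_self i)))).trans (hd _ hsup)

theorem _root_.mem_sStar_of_isLUB {f : ℕ → Omega1} {d : Omega1} (hd : d ∈ S)
    (hf : IsLUB (range f) d) : f ∈ sStar S := by
  have hle : ⨆ n, (f n).toOrdinal ≤ d.toOrdinal := Ordinal.iSup_le fun n => hf.1 ⟨n, rfl⟩
  let c : Omega1 := ⟨⨆ n, (f n).toOrdinal, hle.trans_lt d.2⟩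
  have hc : c ∈ upperBounds (range f) := by
    rintro _ ⟨n, rfl⟩
    exact Ordinal.le_iSup (fun n => (f n).toOrdinal) n
  exact ⟨d, hd, hle.antisymm (hf.2 hc)⟩

theorem IsCofinal.dense_sStar (hS : Omega1.IsCofinal S) : Dense (sStar S) := by
  refine (isTopologicalBasis_cylinders _).dense_iff.2 ?_
  rintro _ ⟨x, n, rfl⟩ -
  obtain ⟨c, hc⟩ := bddAbove_of_countable (countable_range x)
  obtain ⟨d, hd, hcd⟩ := hS c
  have hle : ∀ i, (if i < n then x i else d) ≤ d := fun i => by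
    split_ifs
    exacts [(hc ⟨i, rfl⟩).trans hcd, le_rfl]
  refine ⟨fun i => if i < n then x i else d, fun i hi => if_pos hi, mem_sStar_of_isLUB hd ?_⟩
  exact IsGreatest.isLUB ⟨⟨n, if_neg n.lt_irrefl⟩, forall_mem_range.2 hle⟩

end Omega1

section LegalHistory

variable {E : Type*} [TopologicalSpace E] {n : ℕ} {h : ℕ → Set E} {U : Set E}

theorem TandemLegalHist.subset (hh : TandemLegalHist n h) {i j : ℕ} (hij : i ≤ j) (hj : j < n)
    (hboard : i % 4 < 2 ↔ j % 4 < 2) : h j ⊆ h i := by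
  rcases hij.eq_or_lt with rfl | hlt
  · exact Subset.rfl
  · by_cases hi : i % 4 < 2
    · exact hh.2.1 i j hlt hj hi (hboard.1 hi)
    · exact hh.2.2 i j hlt hj (by omega) (by omega)

theorem TandemLegalHist.update (hh : TandemLegalHist n h) (ho : IsOpen U) (hne : U.Nonempty)
    (hU : ∀ i < n, (i % 4 < 2 ↔ n % 4 < 2) → U ⊆ h i) :
    TandemLegalHist (n + 1) (update h n U) := by
  have hsub : ∀ i j, i < j → j < n + 1 → (i % 4 < 2 ↔ j % 4 < 2) →
      Function.update h n U j ⊆ Function.update h n U i := fun i j hij hj hboard => by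
    rw [update_of_ne (a := i) (by omega)]
    rcases Nat.lt_succ_iff_lt_or_eq.1 hj with hjn | rfl
    · rw [update_of_ne hjn.ne]
      exact hh.subset hij.le hjn hboard
    · rw [update_self]
      exact hU i hij hboard
  refine ⟨fun i hi => ?_, fun i j hij hj hi hj' => hsub i j hij hj (by omega),
    fun i j hij hj hi hj' => hsub i j hij hj (by omega)⟩
  rcases Nat.lt_succ_iff_lt_or_eq.1 hi with hin | rfl
  · rw [update_of_ne hin.ne]
    exact hh.1 i hin
  · rw [update_self]
    exact ⟨ho, hne⟩

theorem TandemLegalHist.update_of_even (hh : TandemLegalHist n h) (hn : n % 2 = 0) (ho : IsOpen U)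
    (hne : U.Nonempty) (hU : 4 ≤ n → U ⊆ h (n - 3)) :
    TandemLegalHist (n + 1) (Function.update h n U) :=
  hh.update ho hne fun _ hi hboard =>
    (hU (by omega)).trans (hh.subset (by omega) (by omega) (by omega))

theorem TandemLegalHist.update_of_odd (hh : TandemLegalHist n h) (hn : n % 2 = 1) (ho : IsOpen U)
    (hne : U.Nonempty) (hU : U ⊆ h (n - 1)) : TandemLegalHist (n + 1) (Function.update h n U) :=
  hh.update ho hne fun _ hi hboard => hU.trans (hh.subset (by omega) (by omega) (by omega))

end LegalHistory

section LabelledPlay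

variable {E A : Type*}

/-- A rule by which α' answers the challenge `U` of round `r` (where the rounds of the `V`-board
are the even ones) with a nonempty open subset `ρ r U a`, for any choice of a label `a`. -/
def IsReplyRule [TopologicalSpace E] (ρ : ℕ → Set E → A → Set E) : Prop :=
  ∀ r U a, IsOpen U → U.Nonempty → IsOpen (ρ r U a) ∧ (ρ r U a).Nonempty ∧ ρ r U a ⊆ U

/-- The strategy of α' that answers the challenge of round `r` by the rule `ρ` with label `c r`. -/
def labelStrategy (ρ : ℕ → Set E → A → Set E) (c : ℕ → A) (n : ℕ) (h : ℕ → Set E) : Set E :=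
  ρ (n / 2) (h (n - 1)) (c (n / 2))

/-- The history after `l.length` rounds in which β' follows `σ` and α' answers by the rule `ρ` with
the labels in `l`, the most recent of which comes first. -/
def labelledHist (σ : ℕ → (ℕ → Set E) → Set E) (ρ : ℕ → Set E → A → Set E) : List A → ℕ → Set E
  | [] => fun _ => ∅
  | a :: l =>
    let n := 2 * l.length
    let U := σ n (labelledHist σ ρ l)
    update (update (labelledHist σ ρ l) n U) (n + 1) (ρ l.length U a)

/-- The move of the β'-strategy `σ` at the node with labels `l` of the tree of labelled plays. -/
def challenge (σ : ℕ → (ℕ → Set E) → Set E) (ρ : ℕ → Set E → A → Set E) (l : List A) : Set E :=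
  σ (2 * l.length) (labelledHist σ ρ l)

/-- The answer with label `a` to the challenge at the node with labels `l`. -/
def reply (σ : ℕ → (ℕ → Set E) → Set E) (ρ : ℕ → Set E → A → Set E) (l : List A) (a : A) : Set E :=
  ρ l.length (challenge σ ρ l) a

/-- The labels `c 0, …, c (r - 1)`, in the order used by `labelledHist`: most recent first. -/
def recentLabels (c : ℕ → A) : ℕ → List A
  | 0 => []
  | r + 1 => c r :: recentLabels c r

@[simp]
theorem length_recentLabels (c : ℕ → A) (r : ℕ) : (recentLabels c r).length = r := by
  induction r with
  | zero => rfl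
  | succ r ih => simp [recentLabels, ih]

theorem mem_range_of_mem_recentLabels {c : ℕ → A} {r : ℕ} {x : A} (hx : x ∈ recentLabels c r) :
    x ∈ range c := by
  induction r with
  | zero => simp [recentLabels] at hx
  | succ r ih =>
    rcases List.mem_cons.1 hx with rfl | hx
    exacts [mem_range_self r, ih hx]

variable {σ : ℕ → (ℕ → Set E) → Set E} {ρ : ℕ → Set E → A → Set E} {c : ℕ → A}
  {V V' W W' : ℕ → Set E}

theorem labelledHist_cons (a : A) (l : List A) :
    labelledHist σ ρ (a :: l) = update (update (labelledHist σ ρ l) (2 * l.length)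
      (challenge σ ρ l)) (2 * l.length + 1) (reply σ ρ l a) :=
  rfl

theorem labelledHist_cons_reply (a : A) (l : List A) :
    labelledHist σ ρ (a :: l) (2 * l.length + 1) = reply σ ρ l a :=
  update_self ..

theorem tandemHist_succ (n : ℕ) :
    tandemHist V V' W W' (n + 1) = update (tandemHist V V' W W' n) n (tandemMove V V' W W' n) := by
  funext i
  rcases lt_trichotomy i n with hi | rfl | hi
  · simp [tandemHist, hi, hi.ne, hi.trans n.lt_succ_self]
  · simp [tandemHist]
  · simp [tandemHist, hi.ne', hi.not_gt, Nat.not_lt.2 (Nat.succ_le_of_lt hi)]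

theorem TandemFollowsBeta.tandemMove_eq (hβ : TandemFollowsBeta σ V V' W W') (r : ℕ) :
    tandemMove V V' W W' (2 * r) = σ (2 * r) (tandemHist V V' W W' (2 * r)) := by
  obtain ⟨k, rfl | rfl⟩ := r.even_or_odd'
  · rw [show 2 * (2 * k) = 4 * k by ring, ← (hβ k).1]
    simp [tandemMove]
  · rw [show 2 * (2 * k + 1) = 4 * k + 2 by ring, ← (hβ k).2]
    simp [tandemMove, show (4 * k + 2) / 4 = k by omega]

theorem TandemFollowsAlpha.tandemMove_eq (hα : TandemFollowsAlpha σ V V' W W') (r : ℕ) :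
    tandemMove V V' W W' (2 * r + 1) = σ (2 * r + 1) (tandemHist V V' W W' (2 * r + 1)) := by
  obtain ⟨k, rfl | rfl⟩ := r.even_or_odd'
  · rw [show 2 * (2 * k) + 1 = 4 * k + 1 by ring, ← (hα k).1]
    simp [tandemMove, show (4 * k + 1) / 4 = k by omega]
  · rw [show 2 * (2 * k + 1) + 1 = 4 * k + 3 by ring, ← (hα k).2]
    simp [tandemMove, show (4 * k + 3) / 4 = k by omega]

theorem tandemHist_eq_labelledHist (hβ : TandemFollowsBeta σ V V' W W')
    (hα : TandemFollowsAlpha (labelStrategy ρ c) V V' W W') (r : ℕ) :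
    tandemHist V V' W W' (2 * r) = labelledHist σ ρ (recentLabels c r) := by
  induction r with
  | zero => rfl
  | succ r ih =>
    have hchallenge : tandemMove V V' W W' (2 * r) = challenge σ ρ (recentLabels c r) := by
      rw [hβ.tandemMove_eq, ih, challenge, length_recentLabels]
    have hreply : tandemMove V V' W W' (2 * r + 1) = reply σ ρ (recentLabels c r) (c r) := by
      rw [hα.tandemMove_eq, labelStrategy, tandemHist_succ, Nat.add_sub_cancel, update_self,
        hchallenge, reply, length_recentLabels, show (2 * r + 1) / 2 = r by omega]
    rw [show 2 * (r + 1) = 2 * r + 1 + 1 by ring, tandemHist_succ, tandemHist_succ, ih, hchallenge,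
      hreply, recentLabels, labelledHist_cons, length_recentLabels]

theorem tandemMove_eq_challenge (hβ : TandemFollowsBeta σ V V' W W')
    (hα : TandemFollowsAlpha (labelStrategy ρ c) V V' W W') (r : ℕ) :
    tandemMove V V' W W' (2 * r) = challenge σ ρ (recentLabels c r) := by
  rw [hβ.tandemMove_eq, tandemHist_eq_labelledHist hβ hα, challenge, length_recentLabels]

variable [TopologicalSpace E]

theorem IsReplyRule.isTandemAlphaStrat (hρ : IsReplyRule ρ) (c : ℕ → A) :
    IsTandemAlphaStrat (labelStrategy ρ c) := fun n _ hh hn =>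
  let ⟨ho, hne⟩ := hh.1 (n - 1) (by omega)
  hρ _ _ _ ho hne

theorem tandemLegalHist_labelledHist (hσ : IsTandemBetaStrat σ) (hρ : IsReplyRule ρ) (l : List A) :
    TandemLegalHist (2 * l.length) (labelledHist σ ρ l) := by
  induction l with
  | nil => exact ⟨by simp, by simp, by simp⟩
  | cons a l ih =>
    obtain ⟨ho, hne, hsub⟩ := hσ _ _ ih (by omega)
    obtain ⟨ho', hne', hsub'⟩ := hρ l.length _ a ho hne
    refine (ih.update_of_even (by omega) ho hne hsub).update_of_odd (by omega) ho' hne' ?_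
    rwa [Nat.add_sub_cancel, update_self]

theorem isOpen_challenge (hσ : IsTandemBetaStrat σ) (hρ : IsReplyRule ρ) (l : List A) :
    IsOpen (challenge σ ρ l) :=
  (hσ _ _ (tandemLegalHist_labelledHist hσ hρ l) (by omega)).1

theorem nonempty_challenge (hσ : IsTandemBetaStrat σ) (hρ : IsReplyRule ρ) (l : List A) :
    (challenge σ ρ l).Nonempty :=
  (hσ _ _ (tandemLegalHist_labelledHist hσ hρ l) (by omega)).2.1

theorem reply_subset_challenge (hσ : IsTandemBetaStrat σ) (hρ : IsReplyRule ρ) (l : List A)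
    (a : A) : reply σ ρ l a ⊆ challenge σ ρ l :=
  (hρ _ _ _ (isOpen_challenge hσ hρ l) (nonempty_challenge hσ hρ l)).2.2

theorem challenge_cons_cons_subset_reply (hσ : IsTandemBetaStrat σ) (hρ : IsReplyRule ρ)
    (l : List A) (a b : A) : challenge σ ρ (b :: a :: l) ⊆ reply σ ρ l a := by
  have hsub := (hσ _ _ (tandemLegalHist_labelledHist hσ hρ (b :: a :: l)) (by omega)).2.2
    (by simp only [List.length_cons]; omega)
  have hpos : 2 * (b :: a :: l).length - 3 = 2 * l.length + 1 := by
    simp only [List.length_cons]; omega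
  rwa [hpos, labelledHist_cons, update_of_ne (by simp), update_of_ne (by simp; omega),
    labelledHist_cons_reply] at hsub

theorem antitone_reply_recentLabels (hσ : IsTandemBetaStrat σ) (hρ : IsReplyRule ρ) (c : ℕ → A)
    (e : ℕ) : Antitone fun k => reply σ ρ (recentLabels c (2 * k + e)) (c (2 * k + e)) := by
  refine antitone_nat_of_succ_le fun k => ?_
  rw [show 2 * (k + 1) + e = 2 * k + e + 1 + 1 by ring]
  exact (reply_subset_challenge hσ hρ _ _).trans (challenge_cons_cons_subset_reply hσ hρ _ _ _)

theorem tauBaire_of_exists_labels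
    (H : ∀ σ : ℕ → (ℕ → Set E) → Set E, IsTandemBetaStrat σ →
      ∃ (ρ : ℕ → Set E → A → Set E) (c : ℕ → A), IsReplyRule ρ ∧
        ∀ e < 2, (⋂ k, reply σ ρ (recentLabels c (2 * k + e)) (c (2 * k + e))).Nonempty) :
    TauBaire E := by
  intro σ hσ
  obtain ⟨ρ, c, hρ, hne⟩ := H σ hσ
  refine ⟨labelStrategy ρ c, hρ.isTandemAlphaStrat c, fun V V' W W' hβ hα => ?_⟩
  have hmove : ∀ e < 2, (⋂ k, tandemMove V V' W W' (2 * (2 * k + e))).Nonempty := fun e he => by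
    simp only [tandemMove_eq_challenge hβ hα]
    exact (hne e he).mono (iInter_mono fun k => reply_subset_challenge hσ hρ _ _)
  constructor
  · simpa [tandemMove, ← mul_assoc] using hmove 0 (by omega)
  · simpa [tandemMove, mul_add, ← mul_assoc, show ∀ k, (4 * k + 2) / 4 = k by omega]
      using hmove 1 (by omega)

end LabelledPlay

section Cylinder

theorem diagonal_mem_cylinder {E : ℕ → Type*} {g : ℕ → ∀ n, E n} {m : ℕ → ℕ} (hm : ∀ k, k < m k)
    (hne : ∀ j k, (cylinder (g j) (m j) ∩ cylinder (g k) (m k)).Nonempty) (k : ℕ) :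
    (fun i => g i i) ∈ cylinder (g k) (m k) := fun i hi =>
  let ⟨_, hxi, hxk⟩ := hne i k
  (hxi i (hm i)).symm.trans (hxk i hi)

variable {α : Type*} [TopologicalSpace α] [DiscreteTopology α] {X : Set (ℕ → α)}

theorem exists_preimage_cylinder_subset {U : Set X} (ho : IsOpen U) (hne : U.Nonempty) (N : ℕ)
    (a : α) : ∃ (f : ℕ → α) (m : ℕ), N < m ∧ a ∈ f '' Iio m ∧
      Subtype.val ⁻¹' cylinder f m ⊆ U := by
  obtain ⟨x, hx⟩ := hne
  obtain ⟨O, hO, rfl⟩ := isOpen_induced_iff.1 ho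
  obtain ⟨_, ⟨y, n, rfl⟩, hxy, hsub⟩ :=
    (isTopologicalBasis_cylinders fun _ => α).exists_subset_of_mem_open hx hO
  have hyx : cylinder x.1 n = cylinder y n := mem_cylinder_iff_eq.1 hxy
  let M := max N n
  have hext : cylinder (update x.1 M a) (M + 1) ⊆ cylinder x.1 n :=
    calc cylinder (update x.1 M a) (M + 1)
      _ ⊆ cylinder (update x.1 M a) M := cylinder_anti _ M.le_succ
      _ = cylinder x.1 M := mem_cylinder_iff_eq.1 (update_mem_cylinder _ _ _)
      _ ⊆ cylinder x.1 n := cylinder_anti _ (le_max_right N n)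
  exact ⟨update x.1 M a, M + 1, Nat.lt_succ_of_le (le_max_left N n),
    ⟨M, M.lt_succ_self, update_self ..⟩, preimage_mono ((hext.trans_eq hyx).trans hsub)⟩

theorem exists_isReplyRule_preimage_cylinder (hX : Dense X) :
    ∃ (f : ℕ → Set X → α → ℕ → α) (m : ℕ → Set X → α → ℕ),
      IsReplyRule (fun r U a => (Subtype.val ⁻¹' cylinder (f r U a) (m r U a) : Set X)) ∧
      ∀ r U a, IsOpen U → U.Nonempty → r < m r U a ∧ a ∈ f r U a '' Iio (m r U a) := by
  have hexists : ∀ (r : ℕ) (U : Set X) (a : α), ∃ (f : ℕ → α) (m : ℕ), IsOpen U → U.Nonempty →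
      r < m ∧ a ∈ f '' Iio m ∧ Subtype.val ⁻¹' cylinder f m ⊆ U := fun r U a => by
    by_cases hU : IsOpen U ∧ U.Nonempty
    · obtain ⟨f, m, hfm⟩ := exists_preimage_cylinder_subset hU.1 hU.2 r a
      exact ⟨f, m, fun _ _ => hfm⟩
    · exact ⟨fun _ => a, 0, fun ho hne => absurd ⟨ho, hne⟩ hU⟩
  choose f m hfm using hexists
  refine ⟨f, m, fun r U a ho hne => ⟨?_, ?_, (hfm r U a ho hne).2.2⟩,
    fun r U a ho hne => ⟨(hfm r U a ho hne).1, (hfm r U a ho hne).2.1⟩⟩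
  · exact (isOpen_cylinder _ _ _).preimage continuous_subtype_val
  · obtain ⟨x, hx, hxX⟩ :=
      hX.inter_open_nonempty _ (isOpen_cylinder _ _ _) ⟨f r U a, self_mem_cylinder _ (m r U a)⟩
    exact ⟨⟨x, hxX⟩, hx⟩

theorem nonempty_iInter_preimage_cylinder {S : Set Omega1} {d : Omega1} (hd : d ∈ S)
    (hlim : Order.IsSuccLimit d) {g : ℕ → ℕ → Omega1} {m : ℕ → ℕ} (hm : ∀ k, k < m k)
    (hanti : Antitone fun k => (Subtype.val ⁻¹' cylinder (g k) (m k) : Set (sStar S)))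
    (hne : ∀ k, (Subtype.val ⁻¹' cylinder (g k) (m k) : Set (sStar S)).Nonempty)
    (hlt : ∀ k i, g k i < d) (hsurj : ∀ x < d, ∃ k, x ∈ g k '' Iio (m k)) :
    (⋂ k, (Subtype.val ⁻¹' cylinder (g k) (m k) : Set (sStar S))).Nonempty := by
  have hmem : ∀ k, (fun i => g i i) ∈ cylinder (g k) (m k) :=
    diagonal_mem_cylinder hm fun j k =>
      let ⟨x, hx⟩ := hne (max j k)
      ⟨x, hanti (le_max_left j k) hx, hanti (le_max_right j k) hx⟩
  have hrange : range (fun i => g i i) = Iio d := by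
    refine Subset.antisymm (range_subset_iff.2 fun i => hlt i i) fun x hx => ?_
    obtain ⟨k, i, hi, rfl⟩ := hsurj x hx
    exact ⟨i, hmem k i hi⟩
  exact ⟨⟨_, mem_sStar_of_isLUB hd (hrange ▸ hlim.isLUB_Iio)⟩, mem_iInter.2 hmem⟩

theorem nonempty_iInter_reply_recentLabels {S : Set Omega1} {d : Omega1} (hd : d ∈ S)
    (hlim : Order.IsSuccLimit d) {σ : ℕ → (ℕ → Set (sStar S)) → Set (sStar S)}
    (hσ : IsTandemBetaStrat σ) {f : ℕ → Set (sStar S) → Omega1 → ℕ → Omega1}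
    {m : ℕ → Set (sStar S) → Omega1 → ℕ} {ρ : ℕ → Set (sStar S) → Omega1 → Set (sStar S)}
    (hρ : IsReplyRule ρ) (hρf : ∀ r U a, ρ r U a = Subtype.val ⁻¹' cylinder (f r U a) (m r U a))
    (hfm : ∀ r U a, IsOpen U → U.Nonempty → r < m r U a ∧ a ∈ f r U a '' Iio (m r U a))
    {c : ℕ → Omega1} (hlt : ∀ r i, f r (challenge σ ρ (recentLabels c r)) (c r) i < d) {e : ℕ}
    (hc : ∀ x < d, ∃ k, c (2 * k + e) = x) :
    (⋂ k, reply σ ρ (recentLabels c (2 * k + e)) (c (2 * k + e))).Nonempty := by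
  have hopen : ∀ l, IsOpen (challenge σ ρ l) := isOpen_challenge hσ hρ
  have hne : ∀ l, (challenge σ ρ l).Nonempty := nonempty_challenge hσ hρ
  have hanti := antitone_reply_recentLabels hσ hρ c e
  have hreply : ∀ k, (reply σ ρ (recentLabels c (2 * k + e)) (c (2 * k + e))).Nonempty :=
    fun k => (hρ _ _ _ (hopen _) (hne _)).2.1
  simp only [reply, length_recentLabels, hρf] at hanti hreply ⊢
  refine nonempty_iInter_preimage_cylinder hd hlim (fun k => ?_) hanti hreply
    (fun k => hlt (2 * k + e)) fun x hx => ?_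
  · exact lt_of_le_of_lt (by omega) (hfm (2 * k + e) _ _ (hopen _) (hne _)).1
  · obtain ⟨k, rfl⟩ := hc x hx
    exact ⟨k, (hfm _ _ _ (hopen _) (hne _)).2⟩

end Cylinder

/-- If `S` is a stationary subset of `ω₁`, then the space `S*` is τ-Baire. -/
theorem tauBaire_sStar_of_isStationary (S : Set Omega1) (hS : Omega1.IsStationary S) :
    TauBaire ↥(sStar S) := by
  refine tauBaire_of_exists_labels (A := Omega1) fun σ hσ => ?_
  obtain ⟨f, m, hρ, hfm⟩ := exists_isReplyRule_preimage_cylinder hS.isCofinal.dense_sStar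
  let ρ : ℕ → Set (sStar S) → Omega1 → Set (sStar S) :=
    fun r U a => Subtype.val ⁻¹' cylinder (f r U a) (m r U a)
  obtain ⟨d, hdS, hlim, hd⟩ := hS.exists_isSuccLimit_closedUnder
    fun l i => f l.tail.length (challenge σ ρ l.tail) (l.headD ⊥) i
  obtain ⟨b, hb⟩ := ((Omega1.countable_Iic d).mono Iio_subset_Iic_self).exists_eq_range
    hlim.nonempty_Iio
  let c : ℕ → Omega1 := fun r => b (r / 2)
  have hc : ∀ r, c r < d := fun r => hb.ge (mem_range_self (r / 2))
  have hlt : ∀ r i, f r (challenge σ ρ (recentLabels c r)) (c r) i < d := fun r i => by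
    simpa using hd (c r :: recentLabels c r) (List.forall_mem_cons.2 ⟨hc r, fun x hx =>
      let ⟨t, ht⟩ := mem_range_of_mem_recentLabels hx
      ht ▸ hc t⟩) i
  refine ⟨ρ, c, hρ, fun e he => ?_⟩
  refine nonempty_iInter_reply_recentLabels hdS hlim hσ hρ (fun _ _ _ => rfl) hfm hlt fun x hx => ?_
  obtain ⟨k, rfl⟩ := hb.le hx
  exact ⟨k, congrArg b (by omega)⟩
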